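/- Let a, b ∈ [0,1] and λ₁, λ₂ ≥ 0 with √λ₁ + √λ₂ ≤ 1, and let K = {(q₁,q₂) ∈ [0,1]² : q₁(1−q₂) ≥ λ₁ and q₂(1−q₁) ≥ λ₂}. Then the points P₁ = (√λ₁, 1−√λ₁) and P₂ = (1−√λ₂, √λ₂) both belong to K, and for every (q₁,q₂) ∈ K, S(q₁,q₂) = a·q₁(1−q₂) + b·q₂(1−q₁) ≤ max(S(P₁), S(P₂)) = max(a·λ₁ + b·(1−√λ₁)², a·(1−√λ₂)² + b·λ₂). -/

import Mathlib

/-!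
In the coordinates `x = √(q₁(1 - q₂))`, `y = √(q₂(1 - q₁))` the throughput is `a x² + b y²` and
the stability constraints read `x ≥ √λ₁`, `y ≥ √λ₂`. By AM-GM, `x + y ≤ 1`
(`sqrt_rates_add_le_one`), so the throughput is at most `a x² + b (1 - x)²` with
`√λ₁ ≤ x ≤ 1 - √λ₂`. This function of `x` is convex, hence maximal at an endpoint of the interval
(`quad_le_max`), and its endpoint values are the throughputs at `P₁` and `P₂`.
-/

/-- AM-GM on each root: `√(q₁(1 - q₂)) ≤ (q₁ + 1 - q₂) / 2`, and symmetrically; the two bounds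
add up to `1`. -/
lemma sqrt_rates_add_le_one {q r : ℝ} (hq0 : 0 ≤ q) (hq1 : q ≤ 1) (hr0 : 0 ≤ r) (hr1 : r ≤ 1) :
    Real.sqrt (q * (1 - r)) + Real.sqrt (r * (1 - q)) ≤ 1 := by
  have hx : Real.sqrt (q * (1 - r)) ≤ (q + (1 - r)) / 2 :=
    Real.sqrt_le_iff.mpr ⟨by linarith, by nlinarith [sq_nonneg (q - (1 - r))]⟩
  have hy : Real.sqrt (r * (1 - q)) ≤ (r + (1 - q)) / 2 :=
    Real.sqrt_le_iff.mpr ⟨by linarith, by nlinarith [sq_nonneg (r - (1 - q))]⟩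
  linarith

/-- The convex quadratic `x ↦ a x² + b (1 - x)²` on `[s, m]` is bounded by its endpoint values. -/
lemma quad_le_max {a b s x m : ℝ} (ha : 0 ≤ a) (hb : 0 ≤ b) (hs : s ≤ x) (hm : x ≤ m) :
    a * x ^ 2 + b * (1 - x) ^ 2 ≤
      max (a * s ^ 2 + b * (1 - s) ^ 2) (a * m ^ 2 + b * (1 - m) ^ 2) := by
  -- `(a + b) (x + s) - 2 b` is the slope of the chord over `[s, x]`; by convexity the chord
  -- over `[x, m]` is at least as steep.
  rcases le_total ((a + b) * (x + s) - 2 * b) 0 with h | h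
  · apply le_max_of_le_left
    nlinarith [mul_nonneg (sub_nonneg.mpr hs) (neg_nonneg.mpr h)]
  · apply le_max_of_le_right
    have h' : 0 ≤ (a + b) * (m + x) - 2 * b := by
      nlinarith [mul_nonneg (add_nonneg ha hb) (sub_nonneg.mpr (hs.trans hm))]
    nlinarith [mul_nonneg (sub_nonneg.mpr hm) h']

/-- Case (3) of Theorem 2: when √λ₁ + √λ₂ ≤ 1, the points P₁ = (√λ₁, 1−√λ₁)
and P₂ = (1−√λ₂, √λ₂) lie in the (closed) stability region K, and the
throughput on K is bounded by
max(S(P₁), S(P₂)) = max(a·λ₁ + b·(1−√λ₁)², a·(1−√λ₂)² + b·λ₂). -/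
theorem stmt_10 (a b l1 l2 : ℝ)
    (ha : a ∈ Set.Icc (0:ℝ) 1) (hb : b ∈ Set.Icc (0:ℝ) 1)
    (h1 : 0 ≤ l1) (h2 : 0 ≤ l2)
    (hsum : Real.sqrt l1 + Real.sqrt l2 ≤ 1)
    (K : Set (ℝ × ℝ))
    (hK : K = {p : ℝ × ℝ | p.1 ∈ Set.Icc (0:ℝ) 1 ∧ p.2 ∈ Set.Icc (0:ℝ) 1 ∧
      l1 ≤ p.1 * (1 - p.2) ∧ l2 ≤ p.2 * (1 - p.1)})
    (S : ℝ × ℝ → ℝ)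
    (hS : S = fun p => a * (p.1 * (1 - p.2)) + b * (p.2 * (1 - p.1)))
    (P1 P2 : ℝ × ℝ)
    (hP1 : P1 = (Real.sqrt l1, 1 - Real.sqrt l1))
    (hP2 : P2 = (1 - Real.sqrt l2, Real.sqrt l2)) :
    P1 ∈ K ∧ P2 ∈ K ∧ (∀ p ∈ K, S p ≤ max (S P1) (S P2)) ∧
      max (S P1) (S P2) =
        max (a * l1 + b * (1 - Real.sqrt l1) ^ 2)
            (a * (1 - Real.sqrt l2) ^ 2 + b * l2) := by
  subst hK hS hP1 hP2
  obtain ⟨ha0, -⟩ := ha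
  obtain ⟨hb0, -⟩ := hb
  have hs0 := Real.sqrt_nonneg l1
  have ht0 := Real.sqrt_nonneg l2
  have hs2 := Real.sq_sqrt h1
  have ht2 := Real.sq_sqrt h2
  have hval : max (a * (√l1 * (1 - (1 - √l1))) + b * ((1 - √l1) * (1 - √l1)))
        (a * ((1 - √l2) * (1 - √l2)) + b * (√l2 * (1 - (1 - √l2)))) =
      max (a * l1 + b * (1 - √l1) ^ 2) (a * (1 - √l2) ^ 2 + b * l2) := by
    congr 1
    · linear_combination a * hs2
    · linear_combination b * ht2
  refine ⟨⟨⟨hs0, by linarith⟩, ⟨by linarith, by linarith⟩, ?_, ?_⟩,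
    ⟨⟨by linarith, by linarith⟩, ⟨ht0, by linarith⟩, ?_, ?_⟩, ?_, hval⟩
  · dsimp only
    nlinarith
  · dsimp only
    nlinarith
  · dsimp only
    nlinarith
  · dsimp only
    nlinarith
  · rintro ⟨q, r⟩ ⟨⟨hq0, hq1⟩, ⟨hr0, hr1⟩, hu, hv⟩
    dsimp only at hq0 hq1 hr0 hr1 hu hv ⊢
    rw [hval]
    have hxy := sqrt_rates_add_le_one hq0 hq1 hr0 hr1
    have hsx := Real.sqrt_le_sqrt hu
    have hty := Real.sqrt_le_sqrt hv
    have hx2 := Real.sq_sqrt (h1.trans hu)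
    have hy2 := Real.sq_sqrt (h2.trans hv)
    have hy0 := Real.sqrt_nonneg (r * (1 - q))
    have hquad := quad_le_max ha0 hb0 hsx
      (show √(q * (1 - r)) ≤ 1 - √l2 by linarith)
    rw [hs2, hx2, sub_sub_cancel, ht2] at hquad
    refine le_trans ?_ hquad
    have hyle : r * (1 - q) ≤ (1 - √(q * (1 - r))) ^ 2 := by
      rw [← hy2]
      exact pow_le_pow_left₀ hy0 (by linarith) 2
    gcongr
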